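/- arXiv:1104.3444 — 7 statements merged into one kernel-verified Lean document; each statement's English description precedes it below -/
import Mathlib

section
/- Let X be a finite set with a distinguished subset of labelled singletons determining π_X. The transfer matrix M = (m(π∨σ))_{π,σ∈Π_l(X,π_X)} factors as M = Z Λ Zᵀ, its restriction satisfies M₀ = Z₀ Λ₀ Z₀ᵀ, and M₀ is invertible. -/
open scoped Classical

noncomputable section

/-! ## Labelled set partitions -/

/-- A labelled set partition of a finite set `α`: a set partition of `α` (encoded as the
equivalence relation `rel` whose classes are the blocks) in which each block either carries
the label `l` or not (a point `x` lies in `lab` iff the block of `x` is labelled). -/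
@[ext]
structure LPart (α : Type*) where
  rel : Setoid α
  lab : Set α
  lab_mem : ∀ ⦃x y : α⦄, rel x y → (x ∈ lab ↔ y ∈ lab)

namespace LPart

variable {α : Type*}

/-- `σ ≤ π` iff every block of `σ` (together with its label) is contained in a block of `π`. -/
instance : PartialOrder (LPart α) where
  le σ π := σ.rel ≤ π.rel ∧ σ.lab ⊆ π.lab
  le_refl σ := ⟨le_rfl, subset_rfl⟩
  le_trans _ _ _ h h' := ⟨h.1.trans h'.1, h.2.trans h'.2⟩
  le_antisymm σ π h h' := LPart.ext (le_antisymm h.1 h'.1) (le_antisymm h.2 h'.2)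

/-- The join (smallest common coarsening) of two labelled set partitions: the join of the
underlying partitions, a block being labelled iff it contains a labelled block of one of the
two partitions. -/
def sup (σ π : LPart α) : LPart α where
  rel := σ.rel ⊔ π.rel
  lab := {x | ∃ y, (σ.rel ⊔ π.rel) x y ∧ (y ∈ σ.lab ∨ y ∈ π.lab)}
  lab_mem := by
    intro x y h
    constructor
    · rintro ⟨z, hz, hl⟩
      exact ⟨z, (σ.rel ⊔ π.rel).iseqv.trans ((σ.rel ⊔ π.rel).iseqv.symm h) hz, hl⟩
    · rintro ⟨z, hz, hl⟩
      exact ⟨z, (σ.rel ⊔ π.rel).iseqv.trans h hz, hl⟩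

instance _root_.Setoid.finite [Finite α] : Finite (Setoid α) :=
  Finite.of_injective (fun s : Setoid α => ⇑s) fun _ _ h => Setoid.eq_iff_rel_eq.2 h

instance [Finite α] : Finite (LPart α) :=
  Finite.of_injective (fun π : LPart α => (π.rel, π.lab))
    (fun a b h => by
      cases a; cases b
      simpa [LPart.mk.injEq] using h)

instance fintype [Finite α] : Fintype (LPart α) := Fintype.ofFinite _

/-- `π` has exactly one labelled block. -/
def OneLab (π : LPart α) : Prop :=
  π.lab.Nonempty ∧ ∀ x ∈ π.lab, ∀ y ∈ π.lab, π.rel x y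

/-- The indicator `m(π)` that `π` has exactly one labelled block. -/
def m (π : LPart α) : ℝ := if π.OneLab then 1 else 0

/-- The labelled set partition `π_X` into singleton blocks, the singleton `{x}` being
labelled iff `x ∈ K`. -/
def piX (K : Set α) : LPart α :=
  ⟨⊥, K, fun x y h => by
    have : x = y := by
      have := Setoid.bot_def (α := α)
      exact congrFun (congrFun this x) y ▸ h
    rw [this]⟩

end LPart

/-- The Möbius function of a finite poset (the unique `μ` with `μ ⋆ ζ = δ`),
evaluated at a pair of elements. -/
def mobius {P : Type*} [Fintype P] [PartialOrder P] (x y : P) : ℝ :=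
  letI : LocallyFiniteOrder P := Fintype.toLocallyFiniteOrder
  IncidenceAlgebra.mu ℝ x y

/-- The state set `Π_l(X, π_X)`: all labelled set partitions `π ≥ π_X` having at least one
labelled block. -/
abbrev LStates (α : Type*) (K : Set α) : Type _ :=
  {π : LPart α // LPart.piX K ≤ π ∧ π.lab.Nonempty}

noncomputable instance {α : Type*} [Finite α] (K : Set α) : Fintype (LStates α K) :=
  Fintype.ofFinite _

/-- `λ(π) = ∑_{σ ∈ Π_l(X,π_X), σ ≥ π} μ_{Π_l(X)}(π, σ) m(σ)`. -/
def lamda {α : Type*} [Finite α] (K : Set α) (π : LPart α) : ℝ :=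
  letI : Fintype (LPart α) := LPart.fintype
  ∑ σ : LStates α K, if π ≤ σ.1 then mobius π σ.1 * LPart.m σ.1 else 0

/-- `Π_l(X,π_X)₀`: the states `π` with `λ(π) ≠ 0`. -/
abbrev LStates0 (α : Type*) [Finite α] (K : Set α) : Type _ :=
  {π : LStates α K // lamda K π.1 ≠ 0}

/-- Restriction of a matrix indexed by `Π_l(X,π_X)` to rows and columns in `Π_l(X,π_X)₀`. -/
def restrict0 {α : Type*} [Finite α] {K : Set α}
    (A : Matrix (LStates α K) (LStates α K) ℝ) : Matrix (LStates0 α K) (LStates0 α K) ℝ :=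
  A.submatrix Subtype.val Subtype.val

/-- Defining property of the Möbius function, summed over the left variable. -/
theorem mobius_sum_left {P : Type*} [Fintype P] [PartialOrder P] (x z : P) :
    (∑ y : P, if x ≤ y ∧ y ≤ z then mobius y z else 0) = if x = z then 1 else 0 := by
  let _ : LocallyFiniteOrder P := Fintype.toLocallyFiniteOrder
  have h := IncidenceAlgebra.sum_Icc_mu_left (𝕜 := ℝ) x z
  rw [← h, ← Finset.sum_filter]
  refine Finset.sum_congr ?_ fun y _ => rfl
  ext y
  simp

theorem zeta_isUnit {P : Type*} [Fintype P] [DecidableEq P] [PartialOrder P] (A : Matrix P P ℝ)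
    (hA : ∀ x y, A x y = if x ≤ y then 1 else 0) : IsUnit A := by
  have h : A * (Matrix.of fun x y : P => if x ≤ y then mobius x y else 0) = 1 := by
    ext x z
    rw [Matrix.mul_apply, Matrix.one_apply]
    refine Eq.trans ?_ ((mobius_sum_left x z).trans (by congr))
    refine Finset.sum_congr rfl fun y _ => ?_
    rw [hA, Matrix.of_apply]
    by_cases h1 : x ≤ y <;> by_cases h2 : y ≤ z <;> simp [h1, h2]
  exact IsUnit.of_mul_eq_one _ h

theorem LPart.sup_le_iff' {α : Type*} (σ π τ : LPart α) :
    σ.sup π ≤ τ ↔ σ ≤ τ ∧ π ≤ τ := by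
  constructor
  · rintro ⟨h1, h2⟩
    exact ⟨⟨le_sup_left.trans h1, fun x hx => h2 ⟨x, (σ.rel ⊔ π.rel).iseqv.refl x, Or.inl hx⟩⟩,
      ⟨le_sup_right.trans h1, fun x hx => h2 ⟨x, (σ.rel ⊔ π.rel).iseqv.refl x, Or.inr hx⟩⟩⟩
  · rintro ⟨h1, h2⟩
    have h : σ.rel ⊔ π.rel ≤ τ.rel := sup_le h1.1 h2.1
    refine ⟨h, ?_⟩
    rintro x ⟨y, hxy, hy⟩
    exact (τ.lab_mem (h hxy)).2 (hy.elim (fun a => h1.2 a) (fun a => h2.2 a))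

theorem lamda_sum {α : Type*} [Fintype α] (K : Set α) (ρ : LStates α K) :
    (∑ τ : LStates α K, if ρ.1 ≤ τ.1 then lamda K τ.1 else 0) = LPart.m ρ.1 := by
  have key : ∀ σ : LStates α K,
      (∑ τ : LStates α K, if ρ.1 ≤ τ.1 ∧ τ.1 ≤ σ.1 then mobius τ.1 σ.1 else 0) =
        if ρ = σ then 1 else 0 := by
    intro σ
    have h := mobius_sum_left ρ.1 σ.1
    simp only [Subtype.ext_iff]
    rw [← h]
    rw [← Finset.sum_filter, ← Finset.sum_filter]
    refine Finset.sum_bij (fun τ _ => τ.1) ?_ ?_ ?_ ?_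
    · intro τ hτ
      simpa using hτ
    · intro a _ b _ hab
      exact Subtype.ext hab
    · intro b hb
      have hb' : ρ.1 ≤ b ∧ b ≤ σ.1 := by simpa using hb
      exact ⟨⟨b, ρ.2.1.trans hb'.1, ρ.2.2.mono hb'.1.2⟩, Finset.mem_filter.2 ⟨Finset.mem_univ _, hb'⟩, rfl⟩
    · intro _ _
      rfl
  calc (∑ τ : LStates α K, if ρ.1 ≤ τ.1 then lamda K τ.1 else 0)
      = ∑ τ : LStates α K, ∑ σ : LStates α K,
          (if ρ.1 ≤ τ.1 ∧ τ.1 ≤ σ.1 then mobius τ.1 σ.1 else 0) * LPart.m σ.1 := by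
        refine Finset.sum_congr rfl fun τ _ => ?_
        by_cases h1 : ρ.1 ≤ τ.1
        · simp only [h1, if_true, true_and, lamda, ite_mul, zero_mul]
        · simp [h1]
    _ = ∑ σ : LStates α K, (if ρ = σ then 1 else 0) * LPart.m σ.1 := by
        rw [Finset.sum_comm]
        refine Finset.sum_congr rfl fun σ _ => ?_
        rw [← Finset.sum_mul, key]
    _ = LPart.m ρ.1 := by simp

/-- The transfer matrix `M = (m(π ∨ σ))` factors as `M = Z Λ Zᵀ`, its restriction to
`Π_l(X,π_X)₀` satisfies `M₀ = Z₀ Λ₀ Z₀ᵀ`, and `M₀` is invertible. -/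
theorem transfer_matrix_factorization {α : Type*} [Fintype α] (K : Set α)
    (M Z Λ : Matrix (LStates α K) (LStates α K) ℝ)
    (hM : ∀ π σ : LStates α K, M π σ = LPart.m (π.1.sup σ.1))
    (hZ : ∀ π σ : LStates α K, Z π σ = if π.1 ≤ σ.1 then 1 else 0)
    (hΛ : Λ = Matrix.diagonal fun π : LStates α K => lamda K π.1) :
    M = Z * Λ * Z.transpose ∧
      restrict0 M = restrict0 Z * restrict0 Λ * (restrict0 Z).transpose ∧
        IsUnit (restrict0 M) := by
  have hfac : M = Z * Λ * Z.transpose := by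
    ext π σ
    have hs : LPart.piX K ≤ π.1.sup σ.1 ∧ (π.1.sup σ.1).lab.Nonempty := by
      have h := ((LPart.sup_le_iff' π.1 σ.1 _).1 le_rfl).1
      exact ⟨π.2.1.trans h, π.2.2.mono h.2⟩
    rw [hM, ← lamda_sum K ⟨π.1.sup σ.1, hs⟩, hΛ, Matrix.mul_apply]
    refine Finset.sum_congr rfl fun τ _ => ?_
    rw [Matrix.mul_diagonal, Matrix.transpose_apply, hZ, hZ]
    simp only [LPart.sup_le_iff']
    by_cases h1 : π.1 ≤ τ.1 <;> by_cases h2 : σ.1 ≤ τ.1 <;> simp [h1, h2]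
  have hΛ0 : restrict0 Λ = Matrix.diagonal fun π : LStates0 α K => lamda K π.1.1 := by
    rw [hΛ]
    exact Matrix.submatrix_diagonal _ _ Subtype.val_injective
  have hfac0 : restrict0 M = restrict0 Z * restrict0 Λ * (restrict0 Z).transpose := by
    ext π σ
    rw [hΛ0]
    have e : restrict0 M π σ = M π.1 σ.1 := rfl
    rw [e, hfac, hΛ, Matrix.mul_apply, Matrix.mul_apply]
    simp only [Matrix.mul_diagonal, Matrix.transpose_apply]
    symm
    refine Finset.sum_bij_ne_zero (fun τ _ _ => τ.1) ?_ ?_ ?_ ?_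
    · intros; exact Finset.mem_univ _
    · intro a _ _ b _ _ hab
      exact Subtype.ext hab
    · intro b _ hb
      have hb0 : lamda K b.1 ≠ 0 := by
        intro h0
        apply hb
        rw [h0]
        ring
      exact ⟨⟨b, hb0⟩, Finset.mem_univ _, hb, rfl⟩
    · intros; rfl
  refine ⟨hfac, hfac0, ?_⟩
  have hZ0 : IsUnit (restrict0 Z) := zeta_isUnit _ fun x y => hZ x.1 y.1
  have hL : IsUnit (restrict0 Λ) := by
    rw [hΛ0, Matrix.isUnit_diagonal, Pi.isUnit_iff]
    exact fun π => isUnit_iff_ne_zero.2 π.2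
  rw [hfac0]
  exact (hZ0.mul hL).mul ((Matrix.isUnit_transpose _).2 hZ0)

end
end

section
/- Let X be a finite set with a distinguished subset of labelled singletons determining π_X. The transfer matrix M = (m(π∨σ))_{π,σ∈Π_l(X,π_X)} is invertible if and only if Π_l(X,π_X) = Π_l(X,π_X)₀ (i.e., λ(π) ≠ 0 for every π ∈ Π_l(X,π_X)); in this case M = M₀. -/
open scoped Classical

noncomputable section

namespace LPart

variable {α : Type*}

theorem sup_le_iff'_s8 (σ π τ : LPart α) : σ.sup π ≤ τ ↔ σ ≤ τ ∧ π ≤ τ := by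
  constructor
  · rintro ⟨h1, h2⟩
    have h1' : σ.rel ⊔ π.rel ≤ τ.rel := h1
    refine ⟨⟨le_sup_left.trans h1', ?_⟩, ⟨le_sup_right.trans h1', ?_⟩⟩
    · intro x hx
      exact h2 ⟨x, (σ.rel ⊔ π.rel).iseqv.refl x, Or.inl hx⟩
    · intro x hx
      exact h2 ⟨x, (σ.rel ⊔ π.rel).iseqv.refl x, Or.inr hx⟩
  · rintro ⟨h1, h2⟩
    have h : σ.rel ⊔ π.rel ≤ τ.rel := sup_le h1.1 h2.1
    refine ⟨h, ?_⟩
    rintro x ⟨y, hxy, hy⟩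
    have hy' : y ∈ τ.lab := hy.elim (fun k => h1.2 k) (fun k => h2.2 k)
    exact (τ.lab_mem (h hxy)).2 hy'

end LPart

theorem mobius_eq_zero {P : Type*} [Fintype P] [PartialOrder P] {x y : P} (h : ¬ x ≤ y) :
    mobius x y = 0 := by
  unfold mobius
  exact IncidenceAlgebra.apply_eq_zero_of_not_le h _

theorem sum_mobius {P : Type*} [Fintype P] [PartialOrder P] (x y : P) :
    (∑ z : P, if z ≤ y then mobius x z else 0) = if x = y then 1 else 0 := by
  let _i : LocallyFiniteOrder P := Fintype.toLocallyFiniteOrder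
  rw [← IncidenceAlgebra.sum_Icc_mu_right (𝕜 := ℝ) x y, ← Finset.sum_filter]
  symm
  apply Finset.sum_subset
  · intro z hz
    simpa using (Finset.mem_Icc.1 hz).2
  · intro z hz hz'
    apply mobius_eq_zero
    intro h
    exact hz' (Finset.mem_Icc.2 ⟨h, by simpa using hz⟩)

/-- Zeta matrix of the states. -/
def zetaMat {α : Type*} (K : Set α) : Matrix (LStates α K) (LStates α K) ℝ :=
  fun π τ => if π.1 ≤ τ.1 then 1 else 0

/-- Möbius matrix of the states. -/
def muMat {α : Type*} [Finite α] (K : Set α) : Matrix (LStates α K) (LStates α K) ℝ :=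
  fun π τ => mobius π.1 τ.1

theorem LStates.up {α : Type*} {K : Set α} (π : LStates α K) {τ : LPart α} (h : π.1 ≤ τ) :
    LPart.piX K ≤ τ ∧ τ.lab.Nonempty :=
  ⟨π.2.1.trans h, π.2.2.mono h.2⟩

theorem muMat_mul_zetaMat {α : Type*} [Finite α] (K : Set α) : muMat K * zetaMat K = 1 := by
  ext π ρ
  have h := sum_mobius π.1 ρ.1
  rw [Matrix.mul_apply, Matrix.one_apply]
  simp only [← Subtype.ext_iff] at h
  rw [← h]
  have h2 : ∀ τ : LStates α K, muMat K π τ * zetaMat K τ ρ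
      = if τ.1 ≤ ρ.1 then mobius π.1 τ.1 else 0 := by
    intro τ
    simp [muMat, zetaMat]
  rw [Finset.sum_congr rfl (fun τ _ => h2 τ)]
  refine Finset.sum_of_injOn Subtype.val (Subtype.val_injective.injOn) (by simp) ?_ (by simp)
  intro τ _ hτ
  by_cases hle : π.1 ≤ τ
  · exact absurd ⟨⟨τ, π.up hle⟩, by simp, rfl⟩ hτ
  · simp [mobius_eq_zero hle]

theorem zeta_lamda {α : Type*} [Finite α] (K : Set α) (π : LStates α K) :
    (∑ τ : LStates α K, if π.1 ≤ τ.1 then lamda K τ.1 else 0) = LPart.m π.1 := by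
  have h1 : (fun τ : LStates α K => lamda K τ.1)
      = (muMat K).mulVec (fun σ => LPart.m σ.1) := by
    ext τ
    unfold lamda Matrix.mulVec dotProduct
    refine Finset.sum_congr rfl fun σ _ => ?_
    by_cases hle : τ.1 ≤ σ.1
    · simp [hle, muMat]
    · simp [hle, muMat, mobius_eq_zero hle]
  have h2 : (zetaMat K).mulVec (fun τ : LStates α K => lamda K τ.1) = fun σ => LPart.m σ.1 := by
    rw [h1, Matrix.mulVec_mulVec, mul_eq_one_comm.1 (muMat_mul_zetaMat K), Matrix.one_mulVec]
  rw [← congrFun h2 π]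
  simp [Matrix.mulVec, dotProduct, zetaMat]

/-- The transfer matrix `M = (m(π ∨ σ))` is invertible iff `Π_l(X,π_X) = Π_l(X,π_X)₀`,
i.e. iff `λ(π) ≠ 0` for every `π ∈ Π_l(X,π_X)`; and in that case `M` coincides with its
restriction `M₀`. -/
theorem transfer_matrix_invertible_iff {α : Type*} [Fintype α] (K : Set α)
    (M : Matrix (LStates α K) (LStates α K) ℝ)
    (hM : ∀ π σ : LStates α K, M π σ = LPart.m (π.1.sup σ.1)) :
    (IsUnit M ↔ ∀ π : LStates α K, lamda K π.1 ≠ 0) ∧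
      ∀ h : ∀ π : LStates α K, lamda K π.1 ≠ 0,
        ∀ π σ : LStates α K, M π σ = restrict0 M ⟨π, h π⟩ ⟨σ, h σ⟩ := by
  refine ⟨?_, fun h π σ => rfl⟩
  have hfac : M = zetaMat K * Matrix.diagonal (fun τ : LStates α K => lamda K τ.1)
      * (zetaMat K).transpose := by
    ext π σ
    have hs : π.1 ≤ π.1.sup σ.1 := ((LPart.sup_le_iff'_s8 _ _ _).1 le_rfl).1
    rw [hM, ← zeta_lamda K ⟨π.1.sup σ.1, π.up hs⟩, Matrix.mul_apply]
    refine Finset.sum_congr rfl fun τ _ => ?_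
    simp only [Matrix.mul_diagonal, Matrix.transpose_apply, zetaMat, LPart.sup_le_iff'_s8]
    by_cases h1 : π.1 ≤ τ.1 <;> by_cases h2 : σ.1 ≤ τ.1 <;> simp [h1, h2]
  have hz : IsUnit (zetaMat K).det :=
    (Matrix.isUnit_iff_isUnit_det _).1 (IsUnit.of_mul_eq_one_right _ (muMat_mul_zetaMat K))
  have hz0 : (zetaMat K).det ≠ 0 := hz.ne_zero
  rw [Matrix.isUnit_iff_isUnit_det, isUnit_iff_ne_zero, hfac, Matrix.det_mul, Matrix.det_mul,
    Matrix.det_transpose, Matrix.det_diagonal]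
  simp [hz0, Finset.prod_eq_zero_iff]

end
end

section
/- Let X be an n-element set and suppose exactly k of the singleton blocks of π_X are labelled. Then the cardinality P₀(n,k) of Π_l(X,π_X)₀ satisfies: P₀(n,0) = ∑_{j=0}^{n−1} C(n,j) B(n−j) = B(n+1) − 1, and for k ≥ 1, P₀(n,k) = ∑_{j=0}^{n−k} C(n−k,j) B(n−j), where B(m) is the m-th Bell number. -/
open scoped Classical

noncomputable section

/-- The `m`-th Bell number: the number of set partitions (equivalence relations) of an
`m`-element set. -/
def bell (m : ℕ) : ℕ := Nat.card (Setoid (Fin m))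

/-- The function whose kernel glues the complement of `V` into one block. -/
def glueFun {α : Type*} (V : Set α) (t : Setoid V) (x : α) : Option (Quotient t) :=
  if h : x ∈ V then some (Quotient.mk t ⟨x, h⟩) else none

theorem glueFun_mem {α : Type*} {V : Set α} {t : Setoid V} {x : α} (h : x ∈ V) :
    glueFun V t x = some (Quotient.mk t ⟨x, h⟩) := dif_pos h

theorem glueFun_not_mem {α : Type*} {V : Set α} {t : Setoid V} {x : α} (h : x ∉ V) :
    glueFun V t x = none := dif_neg h

theorem glueFun_eq_none {α : Type*} {V : Set α} {t : Setoid V} {x : α} :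
    glueFun V t x = none ↔ x ∉ V := by
  unfold glueFun; split_ifs <;> simp_all

/-- At most one unlabelled block. -/
def GoodP {α : Type*} (p : LPart α) : Prop := ∀ x y, x ∉ p.lab → y ∉ p.lab → p.rel x y

/-- The labelled partition with labelled blocks those of `t`. -/
def glue {α : Type*} (V : Set α) (t : Setoid V) : LPart α where
  rel := Setoid.ker (glueFun V t)
  lab := V
  lab_mem := by
    intro x y h
    rw [Setoid.ker_def] at h
    rw [← not_iff_not, ← glueFun_eq_none (t := t), ← glueFun_eq_none (t := t), h]

theorem glue_rel_mem {α : Type*} {V : Set α} {t : Setoid V} {x y : α} (hx : x ∈ V) (hy : y ∈ V) :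
    (glue V t).rel x y ↔ t ⟨x, hx⟩ ⟨y, hy⟩ := by
  change Setoid.ker (glueFun V t) x y ↔ _
  rw [Setoid.ker_def, glueFun_mem hx, glueFun_mem hy, Option.some_inj]
  exact Quotient.eq

/-- Labelled partitions with at most one unlabelled block. -/
def goodEquiv (α : Type*) : {p : LPart α // GoodP p} ≃ Σ V : Set α, Setoid V where
  toFun p := ⟨p.1.lab, Setoid.comap Subtype.val p.1.rel⟩
  invFun q := ⟨glue q.1 q.2, by
    intro x y hx hy
    change Setoid.ker (glueFun q.1 q.2) x y
    rw [Setoid.ker_def, glueFun_not_mem (V := q.1) hx, glueFun_not_mem (V := q.1) hy]⟩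
  left_inv := by
    rintro ⟨p, hp⟩
    apply Subtype.ext
    refine LPart.ext ?_ rfl
    ext x y
    by_cases hx : x ∈ p.lab <;> by_cases hy : y ∈ p.lab
    · exact glue_rel_mem hx hy
    · refine iff_of_false (fun h => hy (((glue _ _).lab_mem h).1 hx)) (fun h => hy ((p.lab_mem h).1 hx))
    · refine iff_of_false (fun h => hx (((glue _ _).lab_mem h).2 hy)) (fun h => hx ((p.lab_mem h).2 hy))
    · refine iff_of_true ?_ (hp x y hx hy)
      change Setoid.ker (glueFun p.lab _) x y
      rw [Setoid.ker_def, glueFun_not_mem hx, glueFun_not_mem hy]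
  right_inv := by
    rintro ⟨V, t⟩
    refine Sigma.ext rfl (heq_of_eq ?_)
    ext ⟨x, hx⟩ ⟨y, hy⟩
    exact glue_rel_mem hx hy

/-- Add a new point whose block is the complement of `V`. -/
def glueOpt {α : Type*} (q : Σ V : Set α, Setoid V) : Setoid (Option α) :=
  Setoid.ker (fun o : Option α => o.elim none (glueFun q.1 q.2))

theorem glueOpt_def {α : Type*} (q : Σ V : Set α, Setoid V) (a b : Option α) :
    glueOpt q a b ↔ a.elim none (glueFun q.1 q.2) = b.elim none (glueFun q.1 q.2) := Iff.rfl

theorem glueOpt_bij (α : Type*) : Function.Bijective (glueOpt (α := α)) := by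
  constructor
  · rintro ⟨V, t⟩ ⟨W, u⟩ h
    have hVW : V = W := by
      ext x
      have := congrArg (fun s : Setoid (Option α) => s (some x) none) h
      simp only [glueOpt_def, Option.elim, glueFun_eq_none, eq_iff_iff] at this
      exact not_iff_not.1 this
    subst hVW
    congr 1
    ext ⟨x, hx⟩ ⟨y, hy⟩
    have := congrArg (fun s : Setoid (Option α) => s (some x) (some y)) h
    simp only [glueOpt_def, Option.elim, eq_iff_iff] at this
    rw [glueFun_mem hx, glueFun_mem hy, glueFun_mem hx, glueFun_mem hy, Option.some_inj,
      Option.some_inj, Quotient.eq, Quotient.eq] at this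
    exact this
  · intro s
    refine ⟨⟨{x | ¬ s (some x) none}, Setoid.comap (fun x => some x.1) s⟩, ?_⟩
    ext a b
    simp only [glueOpt_def]
    have key : ∀ x : α, (glueFun {x | ¬ s (some x) none}
        (Setoid.comap (fun x => some x.1) s) x = none ↔ s (some x) none) := by
      intro x; rw [glueFun_eq_none]; simp
    rcases a with _ | x <;> rcases b with _ | y
    · simp [s.refl]
    · simp only [Option.elim]
      rw [eq_comm, key]; exact ⟨s.symm, s.symm⟩
    · simp only [Option.elim]
      rw [key]
    · simp only [Option.elim]
      by_cases hx : s (some x) none <;> by_cases hy : s (some y) none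
      · rw [(key x).2 hx, (key y).2 hy]
        exact iff_of_true rfl (s.trans hx (s.symm hy))
      · rw [(key x).2 hx, eq_comm, key]
        exact iff_of_false hy fun h => hy (s.trans (s.symm h) hx)
      · rw [(key y).2 hy, key]
        exact iff_of_false hx fun h => hx (s.trans h hy)
      · rw [glueFun_mem (V := {x | ¬ s (some x) none}) hx,
          glueFun_mem (V := {x | ¬ s (some x) none}) hy, Option.some_inj]
        exact Quotient.eq

/-- Add a new point to a partition, either in a new block or in an old one. -/
def addPt {β : Type*} (q : Σ s : Setoid β, Option (Quotient s)) : Setoid (Option β) :=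
  match q with
  | ⟨s, none⟩ => Setoid.ker (Option.map (Quotient.mk s))
  | ⟨s, some c⟩ => Setoid.ker (fun o : Option β => o.elim c (Quotient.mk s))

theorem addPt_some {β : Type*} (q : Σ s : Setoid β, Option (Quotient s)) (x y : β) :
    addPt q (some x) (some y) ↔ q.1 x y := by
  rcases q with ⟨s, _ | c⟩
  · change some (Quotient.mk s x) = some (Quotient.mk s y) ↔ _
    rw [Option.some_inj]; exact Quotient.eq
  · change Quotient.mk s x = Quotient.mk s y ↔ _
    exact Quotient.eq

theorem addPt_none {β : Type*} (q : Σ s : Setoid β, Option (Quotient s)) (x : β) :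
    addPt q none (some x) ↔ q.2 = some (Quotient.mk q.1 x) := by
  rcases q with ⟨s, _ | c⟩
  · change (none : Option (Quotient s)) = some (Quotient.mk s x) ↔ _
    rfl
  · change c = Quotient.mk s x ↔ _
    simp

theorem addPt_bij (β : Type*) : Function.Bijective (addPt (β := β)) := by
  constructor
  · rintro ⟨s, a⟩ ⟨t, b⟩ h
    have hst : s = t := by
      ext x y
      rw [← addPt_some ⟨s, a⟩, ← addPt_some ⟨t, b⟩, h]
    subst hst
    congr 1
    have h2 : ∀ x, a = some (Quotient.mk s x) ↔ b = some (Quotient.mk s x) := by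
      intro x
      rw [← addPt_none ⟨s, a⟩ x, ← addPt_none ⟨s, b⟩ x, h]
    rcases a with _ | a
    · rcases b with _ | b
      · rfl
      · obtain ⟨x, rfl⟩ := Quotient.exists_rep b
        exact (h2 x).2 rfl
    · obtain ⟨x, rfl⟩ := Quotient.exists_rep a
      exact ((h2 x).1 rfl).symm
  · intro s
    have fin : ∀ q : Σ s : Setoid β, Option (Quotient s),
        (∀ x y, q.1 x y ↔ s (some x) (some y)) →
        (∀ x, q.2 = some (Quotient.mk q.1 x) ↔ s none (some x)) → addPt q = s := by
      intro q h1 h2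
      ext a b
      rcases a with _ | x <;> rcases b with _ | y
      · exact iff_of_true ((addPt q).refl _) (s.refl _)
      · rw [addPt_none, h2]
      · rw [Setoid.comm', addPt_none, h2, Setoid.comm']
      · rw [addPt_some, h1]
    by_cases h : ∃ x, s none (some x)
    · obtain ⟨x, hx⟩ := h
      refine ⟨⟨Setoid.comap some s, some (Quotient.mk _ x)⟩, fin _ (fun _ _ => Iff.rfl) ?_⟩
      intro y
      rw [Option.some_inj, Quotient.eq]
      exact ⟨fun h => s.trans hx h, fun h => s.trans (s.symm hx) h⟩
    · refine ⟨⟨Setoid.comap some s, none⟩, fin _ (fun _ _ => Iff.rfl) ?_⟩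
      intro y
      exact iff_of_false (by simp) fun h' => h ⟨y, h'⟩

/-- The Möbius number of a partition lattice. -/
def hh (c : ℕ) : ℝ := (-1) ^ (c - 1) * (Nat.factorial (c - 1) : ℝ)

theorem hh_ne (c : ℕ) : hh c ≠ 0 := by
  unfold hh; positivity

theorem card_addPt_none {β : Type*} [Finite β] (s : Setoid β) :
    Nat.card (Quotient (addPt ⟨s, none⟩)) = Nat.card (Quotient s) + 1 := by
  rw [← Finite.card_option]
  refine Nat.card_congr (Setoid.quotientKerEquivOfSurjective (Option.map (Quotient.mk s)) ?_)
  rintro (_ | q)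
  · exact ⟨none, rfl⟩
  · obtain ⟨x, rfl⟩ := Quotient.exists_rep q
    exact ⟨some x, rfl⟩

theorem card_addPt_some {β : Type*} (s : Setoid β) (c : Quotient s) :
    Nat.card (Quotient (addPt ⟨s, some c⟩)) = Nat.card (Quotient s) := by
  refine Nat.card_congr (Setoid.quotientKerEquivOfSurjective
    (fun o : Option β => o.elim c (Quotient.mk s)) ?_)
  intro q
  obtain ⟨x, rfl⟩ := Quotient.exists_rep q
  exact ⟨some x, rfl⟩

instance setoidFintype {β : Type*} [Finite β] : Fintype (Setoid β) := Fintype.ofFinite _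

theorem sum_hh_option {β : Type*} [Finite β] [Nonempty β] :
    ∑ s : Setoid (Option β), hh (Nat.card (Quotient s)) = 0 := by
  have := Fintype.ofFinite β
  rw [← (addPt_bij β).sum_comp (fun s => hh (Nat.card (Quotient s))), Fintype.sum_sigma]
  refine Finset.sum_eq_zero fun s _ => ?_
  rw [Fintype.sum_option, card_addPt_none]
  simp only [card_addPt_some, Finset.sum_const, nsmul_eq_mul, Finset.card_univ]
  rw [← Nat.card_eq_fintype_card]
  have : Nonempty (Quotient s) := Nonempty.map (Quotient.mk s) inferInstance
  have : 0 < Nat.card (Quotient s) := Nat.card_pos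
  obtain ⟨c, hc⟩ := Nat.exists_eq_succ_of_ne_zero this.ne'
  rw [hc]
  simp only [hh, Nat.succ_eq_add_one, Nat.add_sub_cancel, Nat.factorial_succ, pow_succ]
  push_cast
  ring

theorem sum_hh_congr {β γ : Type*} [Finite β] [Finite γ] (e : β ≃ γ) :
    ∑ s : Setoid γ, hh (Nat.card (Quotient s)) = ∑ s : Setoid β, hh (Nat.card (Quotient s)) := by
  refine Fintype.sum_bijective (fun s : Setoid γ => Setoid.comap e s) ?_ _ _ ?_
  · refine Function.bijective_iff_has_inverse.2 ⟨fun s => Setoid.comap e.symm s, ?_, ?_⟩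
    · intro s; ext x y; simp [Setoid.comap_rel]
    · intro s; ext x y; simp [Setoid.comap_rel]
  · intro s
    congr 1
    refine Nat.card_congr (Quotient.congr e.symm ?_)
    intro x y
    change s x y ↔ s (e (e.symm x)) (e (e.symm y))
    simp

theorem sum_hh {β : Type*} [Finite β] [Nonempty β] :
    ∑ s : Setoid β, hh (Nat.card (Quotient s)) = if Subsingleton β then 1 else 0 := by
  have := Fintype.ofFinite β
  split_ifs with h
  · letI : Unique (Setoid β) := ⟨⟨⊤⟩, fun s => by
      ext x y; obtain rfl := Subsingleton.elim x y; exact iff_of_true (s.refl _) trivial⟩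
    rw [Fintype.sum_unique]
    have : Nat.card (Quotient (default : Setoid β)) = 1 := by
      rw [Nat.card_eq_one_iff_unique]
      exact ⟨inferInstance, Nonempty.map (Quotient.mk _) inferInstance⟩
    rw [this]; simp [hh]
  · obtain ⟨b⟩ := ‹Nonempty β›
    rw [not_subsingleton_iff_nontrivial] at h
    obtain ⟨c, hc⟩ := exists_ne b
    have : Nonempty {x : β // x ≠ b} := ⟨⟨c, hc⟩⟩
    rw [sum_hh_congr (Equiv.optionSubtypeNe b)]
    exact sum_hh_option

theorem sum_hh_ge {β : Type*} [Finite β] [Nonempty β] (r : Setoid β) :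
    (∑ s : Setoid β, if r ≤ s then hh (Nat.card (Quotient s)) else 0) =
      if (∀ x y, r x y) then 1 else 0 := by
  rw [← Finset.sum_filter, ← Finset.sum_subtype_eq_sum_filter]
  have e : (∑ s : {s // r ≤ s}, hh (Nat.card (Quotient s.1))) =
      ∑ s : Setoid (Quotient r), hh (Nat.card (Quotient s)) := by
    refine Fintype.sum_equiv (Setoid.correspondence r).toEquiv _ _ ?_
    intro s
    congr 1
    refine (Nat.card_congr ?_).symm
    refine (Equiv.trans ?_ (Setoid.quotientQuotientEquivQuotient r s.1 s.2))
    exact Quotient.congr (Equiv.refl _) (by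
      rintro ⟨x⟩ ⟨y⟩
      exact Iff.intro (fun h => Quotient.sound h) (fun h => Quotient.exact (s := s.1) h))
  have h2 : (∑ s ∈ Finset.subtype (fun s => r ≤ s) Finset.univ, hh (Nat.card (Quotient s.1))) =
    ∑ s : {s // r ≤ s}, hh (Nat.card (Quotient s.1)) := by
    refine Finset.sum_congr ?_ fun _ _ => rfl
    ext; simp
  have : Nonempty (Quotient r) := Nonempty.map (Quotient.mk r) inferInstance
  rw [h2, e, sum_hh]
  congr 1
  rw [eq_iff_iff]
  constructor
  · intro h x y
    exact Quotient.exact (Subsingleton.elim (Quotient.mk r x) (Quotient.mk r y))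
  · intro h
    constructor
    rintro ⟨x⟩ ⟨y⟩
    exact Quotient.sound (h x y)

theorem le_glue {α : Type*} (p : LPart α) (V : Set α) (t : Setoid V) :
    p ≤ glue V t ↔ (p.lab ⊆ V ∧ ∀ x y, p.rel x y → (x ∈ V ↔ y ∈ V)) ∧
      Setoid.comap Subtype.val p.rel ≤ t := by
  constructor
  · rintro ⟨h1, h2⟩
    refine ⟨⟨h2, fun x y h => (glue V t).lab_mem (h1 h)⟩, ?_⟩
    rintro ⟨x, hx⟩ ⟨y, hy⟩ h
    exact (glue_rel_mem hx hy).1 (h1 h)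
  · rintro ⟨⟨h1, h2⟩, h3⟩
    refine ⟨?_, h1⟩
    intro x y h
    by_cases hx : x ∈ V
    · have hy := (h2 x y h).1 hx
      exact (glue_rel_mem hx hy).2 (h3 (show p.rel x y from h))
    · have hy : y ∉ V := fun hy => hx ((h2 x y h).2 hy)
      change Setoid.ker (glueFun V t) x y
      rw [Setoid.ker_def, glueFun_not_mem hx, glueFun_not_mem hy]

/-- Closed form for `lamda`. -/
def gg {α : Type*} (p : LPart α) : ℝ :=
  if GoodP p then hh (Nat.card (Quotient (Setoid.comap Subtype.val p.rel : Setoid p.lab))) else 0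

theorem gg_ne {α : Type*} (p : LPart α) : gg p ≠ 0 ↔ GoodP p := by
  unfold gg
  split_ifs with h <;> simp [h, hh_ne]

theorem sum_gg {α : Type*} [Finite α] (p : LPart α) (hp : p.lab.Nonempty) :
    (∑ s : LPart α, if p ≤ s then gg s else 0) = LPart.m p := by
  have := Fintype.ofFinite α
  have h1 : (∑ s : LPart α, if p ≤ s then gg s else 0) =
      ∑ q : (Σ V : Set α, Setoid V),
        if p ≤ glue q.1 q.2 then hh (Nat.card (Quotient q.2)) else 0 := by
    have h2 : (∑ s : LPart α, if p ≤ s then gg s else 0) =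
        ∑ s : {s : LPart α // GoodP s}, if p ≤ s.1 then gg s.1 else 0 := by
      symm
      refine Finset.sum_bij_ne_zero (fun s _ _ => s.1) (by simp)
        (fun a _ _ b _ _ h => Subtype.ext h) ?_ (fun _ _ _ => rfl)
      intro s _ hs
      have hg : GoodP s := by
        by_contra hg
        exact hs (by simp [gg, hg])
      exact ⟨⟨s, hg⟩, Finset.mem_univ _, hs, rfl⟩
    rw [h2]
    refine Fintype.sum_equiv (goodEquiv α) _ _ ?_
    intro s
    have h3 : glue (goodEquiv α s).1 (goodEquiv α s).2 = s.1 :=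
      congrArg Subtype.val ((goodEquiv α).symm_apply_apply s)
    rw [h3]
    simp only [gg, if_pos s.2]
    rfl
  rw [h1, Fintype.sum_sigma]
  have h4 : ∀ V : Set α, (∑ t : Setoid V,
      if p ≤ glue V t then hh (Nat.card (Quotient t)) else 0) =
      if V = p.lab ∧ p.OneLab then 1 else 0 := by
    intro V
    simp only [le_glue, ite_and]
    by_cases hc : p.lab ⊆ V ∧ ∀ x y, p.rel x y → (x ∈ V ↔ y ∈ V)
    · have : Nonempty V := (hp.mono hc.1).to_subtype
      simp only [if_pos hc.1, if_pos hc.2]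
      rw [sum_hh_ge, ← ite_and]
      congr 1
      rw [eq_iff_iff]
      constructor
      · intro h
        have hV : V = p.lab := by
          refine Set.Subset.antisymm ?_ hc.1
          intro x hx
          obtain ⟨y, hy⟩ := hp
          exact (p.lab_mem (show p.rel x y from h ⟨x, hx⟩ ⟨y, hc.1 hy⟩)).2 hy
        refine ⟨hV, hp, fun x hx y hy => h ⟨x, hc.1 hx⟩ ⟨y, hc.1 hy⟩⟩
      · rintro ⟨rfl, h⟩ ⟨x, hx⟩ ⟨y, hy⟩
        exact h.2 x hx y hy
    · have hv : V ≠ p.lab := by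
        rintro rfl
        exact hc ⟨subset_rfl, fun x y h => p.lab_mem h⟩
      rw [if_neg hv]
      refine Finset.sum_eq_zero fun t _ => ?_
      rw [← ite_and, ← ite_and, if_neg fun h => hc h.1]
  simp only [h4, ite_and, LPart.m]
  simp

theorem lamda_eq {α : Type*} [Finite α] (K : Set α) (p : LStates α K) : lamda K p.1 = gg p.1 := by
  have h0 : lamda K p.1 = ∑ s : LPart α, if p.1 ≤ s then mobius p.1 s * LPart.m s else 0 := by
    unfold lamda
    rw [← Finset.sum_filter, ← Finset.sum_filter]
    refine Finset.sum_bij (fun s _ => s.1) ?_ ?_ ?_ ?_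
    · intro s hs; simpa using hs
    · intro a _ b _ h; exact Subtype.ext h
    · intro s hs
      have hs' : p.1 ≤ s := by simpa using hs
      exact ⟨⟨s, p.2.1.trans hs', p.2.2.mono hs'.2⟩, Finset.mem_filter.2 ⟨Finset.mem_univ _, hs'⟩, rfl⟩
    · intro _ _; rfl
  have h1 : ∀ s : LPart α, p.1 ≤ s → LPart.m s = ∑ u : LPart α, if s ≤ u then gg u else 0 :=
    fun s hs => (sum_gg s (p.2.2.mono hs.2)).symm
  rw [h0]
  letI : OrderTop (LPart α) := { top := ⟨⊤, Set.univ, by simp⟩, le_top := fun _ => ⟨le_top, Set.subset_univ _⟩ }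
  letI : LocallyFiniteOrder (LPart α) := Fintype.toLocallyFiniteOrder
  have key := IncidenceAlgebra.moebius_inversion_top (𝕜 := ℝ) (α := LPart α) gg
    (fun s => ∑ u ∈ Finset.Ici s, gg u) (fun _ => rfl) p.1
  rw [key, ← Finset.sum_filter]
  refine Finset.sum_congr (by ext; simp) ?_
  intro s hs
  rw [h1 s (by simpa using hs), ← Finset.sum_filter]
  have : Finset.univ.filter (fun u => s ≤ u) = Finset.Ici s := by ext; simp
  rw [this]
  rfl

theorem card_setoid {β : Type*} [Finite β] : Nat.card (Setoid β) = bell (Nat.card β) := by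
  unfold bell
  have e := Finite.equivFin β
  refine Nat.card_congr ⟨fun s => Setoid.comap e.symm s, fun s => Setoid.comap e s, ?_, ?_⟩
  · intro s; ext x y; simp [Setoid.comap_rel]
  · intro s; ext x y; simp [Setoid.comap_rel]

theorem card_states_aux {α : Type*} [Fintype α] (K : Set α) :
    Nat.card {p : LStates α K // lamda K p.1 ≠ 0} =
      ∑ V : Set α, if K ⊆ V ∧ V.Nonempty then bell (Nat.card V) else 0 := by
  have e : {p : LStates α K // lamda K p.1 ≠ 0} ≃
      {q : (Σ V : Set α, Setoid V) // K ⊆ q.1 ∧ q.1.Nonempty} := by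
    refine Equiv.trans (β := {p : {p : LPart α // GoodP p} // K ⊆ p.1.lab ∧ p.1.lab.Nonempty}) ?_ ?_
    · refine ⟨fun p => ⟨⟨p.1.1, (gg_ne _).1 (lamda_eq K p.1 ▸ p.2)⟩, p.1.2.1.2, p.1.2.2⟩,
        fun p => ⟨⟨p.1.1, ⟨bot_le, p.2.1⟩, p.2.2⟩, ?_⟩, fun _ => rfl, fun _ => rfl⟩
      rw [lamda_eq K ⟨p.1.1, ⟨bot_le, p.2.1⟩, p.2.2⟩]
      exact (gg_ne _).2 p.1.2
    · exact (goodEquiv α).subtypeEquiv fun _ => Iff.rfl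
  rw [Nat.card_congr e, Nat.card_eq_fintype_card, Fintype.card_subtype, Finset.card_filter,
    Fintype.sum_sigma]
  refine Finset.sum_congr rfl fun V _ => ?_
  by_cases h : K ⊆ V ∧ V.Nonempty
  · simp only [if_pos h]
    rw [← card_setoid, Nat.card_eq_fintype_card, Finset.sum_const, Finset.card_univ, smul_eq_mul,
      mul_one]
  · simp [if_neg h]

theorem sum_supersets {α : Type*} [Fintype α] (K : Set α) :
    (∑ V : Set α, if K ⊆ V then bell (Nat.card V) else 0) =
      ∑ j ∈ Finset.range (Fintype.card α - K.ncard + 1),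
        (Fintype.card α - K.ncard).choose j * bell (Fintype.card α - j) := by
  have hc : (Kᶜ).toFinset.card = Fintype.card α - K.ncard := by
    rw [← Set.ncard_eq_toFinset_card', Set.ncard_compl, Nat.card_eq_fintype_card]
  have := Finset.sum_powerset_apply_card (fun j => bell (Fintype.card α - j)) (x := (Kᶜ).toFinset)
  rw [hc] at this
  simp only [smul_eq_mul] at this
  rw [← this, ← Finset.sum_filter]
  symm
  refine Finset.sum_bij (fun U _ => (↑U : Set α)ᶜ) ?_ ?_ ?_ ?_
  · intro U hU
    simp only [Finset.mem_powerset, Finset.mem_filter, Finset.mem_univ, true_and] at hU ⊢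
    intro x hx hxU
    have := hU hxU
    simp at this
    exact this hx
  · intro a _ b _ h
    simpa using h
  · intro V hV
    refine ⟨(Vᶜ).toFinset, ?_, by simp⟩
    simp only [Finset.mem_powerset, Finset.mem_filter, Finset.mem_univ, true_and] at hV ⊢
    intro x hx
    simp at hx ⊢
    exact fun h => hx (hV h)
  · intro U _
    congr 1
    rw [Nat.card_coe_set_eq, Set.ncard_compl, Nat.card_eq_fintype_card, Set.ncard_coe_finset]

theorem bell_zero' : bell 0 = 1 := by
  unfold bell
  rw [Nat.card_eq_one_iff_unique]
  exact ⟨⟨fun s t => by ext x; exact x.elim0⟩, ⟨⊤⟩⟩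

theorem sum_all {α : Type*} [Fintype α] :
    (∑ V : Set α, bell (Nat.card V)) = bell (Fintype.card α + 1) := by
  rw [← Nat.card_eq_fintype_card, ← Finite.card_option, ← card_setoid,
    ← Nat.card_congr (Equiv.ofBijective _ (glueOpt_bij α)), Nat.card_sigma]
  exact Finset.sum_congr rfl fun V _ => card_setoid.symm

/-- The cardinality `P₀(n,k)` of `Π_l(X,π_X)₀ = {π ∈ Π_l(X,π_X) : λ(π) ≠ 0}`, where `X` has
`n` elements and `π_X` has `k` labelled (and `n - k` unlabelled) singleton blocks, satisfies
`P₀(n,0) = ∑_{j=0}^{n-1} C(n,j) B(n-j) = B(n+1) - 1` and, for `k ≥ 1`,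
`P₀(n,k) = ∑_{j=0}^{n-k} C(n-k,j) B(n-j)`. -/
theorem card_states0 {α : Type*} [Fintype α] (K : Set α) (n k : ℕ)
    (hn : Fintype.card α = n) (hk : K.ncard = k) :
    (k = 0 →
        Nat.card {π : LStates α K // lamda K π.1 ≠ 0} =
            ∑ j ∈ Finset.range n, n.choose j * bell (n - j) ∧
          Nat.card {π : LStates α K // lamda K π.1 ≠ 0} = bell (n + 1) - 1) ∧
      (1 ≤ k →
        Nat.card {π : LStates α K // lamda K π.1 ≠ 0} =
          ∑ j ∈ Finset.range (n - k + 1), (n - k).choose j * bell (n - j)) := by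
  subst hn hk
  have hsup := sum_supersets K
  rw [card_states_aux]
  constructor
  · intro h0
    have hK : K = ∅ := (Set.ncard_eq_zero (Set.toFinite K)).1 h0
    subst hK
    have h1 : (∑ V : Set α, if (∅ : Set α) ⊆ V ∧ V.Nonempty then bell (Nat.card V) else 0) + 1 =
        ∑ V : Set α, bell (Nat.card V) := by
      rw [← Finset.sum_erase_add _ _ (Finset.mem_univ (∅ : Set α)),
        ← Finset.sum_erase_add _ _ (Finset.mem_univ (∅ : Set α))]
      have h2 : bell (Nat.card (∅ : Set α)) = 1 := by
        rw [Nat.card_coe_set_eq, Set.ncard_empty, bell_zero']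
      rw [h2, if_neg (by simp), add_zero]
      congr 1
      refine Finset.sum_congr rfl fun V hV => ?_
      rw [if_pos ⟨Set.empty_subset V, Set.nonempty_iff_ne_empty.2 (Finset.ne_of_mem_erase hV)⟩]
    have h3 := sum_all (α := α)
    simp only [Set.empty_subset, if_true, Set.ncard_empty, Nat.sub_zero] at hsup
    rw [Finset.sum_range_succ, Nat.sub_self, bell_zero', Nat.choose_self] at hsup
    constructor
    · omega
    · omega
  · intro h1
    rw [← hsup]
    have hne : K.Nonempty := (Set.ncard_pos (Set.toFinite K)).1 h1
    refine Finset.sum_congr rfl fun V _ => ?_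
    congr 1
    rw [eq_iff_iff]
    exact ⟨fun h => h.1, fun h => ⟨h, hne.mono h⟩⟩

end
end

section
/- Let X be an n-element set (n ≥ 1) and suppose exactly k of the singleton blocks of π_X are labelled. Then the cardinality P(n,k) of Π_l(X,π_X) satisfies: P(n,0) = ∑_{j=1}^{n} C(n,j) B(j) B(n−j), and for k ≥ 1, P(n,k) = ∑_{j=0}^{n−k} C(n−k,j) B(k+j) B(n−k−j), where B(m) is the m-th Bell number. -/
open scoped Classical

noncomputable section

/-- Compatible setoids with fixed labelled set split as a pair of setoids. -/
def lpartFiberEquiv {α : Type*} (S : Set α) :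
    {r : Setoid α // ∀ ⦃x y : α⦄, r x y → (x ∈ S ↔ y ∈ S)} ≃
      Setoid S × Setoid (Sᶜ : Set α) where
  toFun r := (r.1.comap Subtype.val, r.1.comap Subtype.val)
  invFun p := ⟨
    { r := fun x y => (∃ (hx : x ∈ S) (hy : y ∈ S), p.1 ⟨x, hx⟩ ⟨y, hy⟩) ∨
        (∃ (hx : x ∈ Sᶜ) (hy : y ∈ Sᶜ), p.2 ⟨x, hx⟩ ⟨y, hy⟩)
      iseqv := by
        refine ⟨?_, ?_, ?_⟩
        · intro x
          by_cases h : x ∈ S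
          · exact Or.inl ⟨h, h, p.1.refl' _⟩
          · exact Or.inr ⟨h, h, p.2.refl' _⟩
        · rintro x y (⟨hx, hy, h⟩ | ⟨hx, hy, h⟩)
          · exact Or.inl ⟨hy, hx, p.1.symm' h⟩
          · exact Or.inr ⟨hy, hx, p.2.symm' h⟩
        · rintro x y z (⟨hx, hy, h⟩ | ⟨hx, hy, h⟩) (⟨hy', hz, h'⟩ | ⟨hy', hz, h'⟩)
          · exact Or.inl ⟨hx, hz, p.1.trans' h h'⟩
          · exact absurd hy hy'
          · exact absurd hy' hy
          · exact Or.inr ⟨hx, hz, p.2.trans' h h'⟩ }, by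
    rintro x y (⟨hx, hy, h⟩ | ⟨hx, hy, h⟩)
    · exact iff_of_true hx hy
    · exact iff_of_false hx hy⟩
  left_inv r := by
    apply Subtype.ext
    apply Setoid.ext
    intro x y
    constructor
    · rintro (⟨hx, hy, h⟩ | ⟨hx, hy, h⟩) <;> exact h
    · intro h
      by_cases hx : x ∈ S
      · exact Or.inl ⟨hx, (r.2 h).1 hx, h⟩
      · exact Or.inr ⟨hx, fun hy => hx ((r.2 h).2 hy), h⟩
  right_inv p := by
    apply Prod.ext
    · apply Setoid.ext
      rintro ⟨x, hx⟩ ⟨y, hy⟩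
      constructor
      · rintro (⟨_, _, h⟩ | ⟨hx', _, h⟩)
        · exact h
        · exact absurd hx hx'
      · intro h
        exact Or.inl ⟨hx, hy, h⟩
    · apply Setoid.ext
      rintro ⟨x, hx⟩ ⟨y, hy⟩
      constructor
      · rintro (⟨hx', _, h⟩ | ⟨_, _, h⟩)
        · exact absurd hx' hx
        · exact h
      · intro h
        exact Or.inr ⟨hx, hy, h⟩

theorem card_setoid_eq_bell (β : Type*) [Finite β] : Nat.card (Setoid β) = bell (Nat.card β) := by
  unfold bell
  have e := Finite.equivFin β
  refine Nat.card_congr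
    { toFun := fun r => r.comap e.symm
      invFun := fun r => r.comap e
      left_inv := fun r => ?_
      right_inv := fun r => ?_ }
  · apply Setoid.ext; intro x y; simp [Setoid.comap_rel]
  · apply Setoid.ext; intro x y; simp [Setoid.comap_rel]

/-- The states, sorted by their labelled set. -/
def lstatesEquiv {α : Type*} (K : Set α) :
    LStates α K ≃ Σ S : {S : Set α // K ⊆ S ∧ S.Nonempty},
      {r : Setoid α // ∀ ⦃x y : α⦄, r x y → (x ∈ S.1 ↔ y ∈ S.1)} where
  toFun π := ⟨⟨π.1.lab, π.2.1.2, π.2.2⟩, π.1.rel, π.1.lab_mem⟩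
  invFun p := ⟨⟨p.2.1, p.1.1, p.2.2⟩, ⟨bot_le, p.1.2.1⟩, p.1.2.2⟩
  left_inv _ := rfl
  right_inv _ := rfl

theorem card_lstates {α : Type*} [Fintype α] (K : Set α) :
    Nat.card (LStates α K) =
      ∑ S ∈ (Finset.univ : Finset (Finset α)).filter (fun S : Finset α => K ⊆ (S : Set α) ∧ S.Nonempty), bell S.card * bell (Fintype.card α - S.card) := by
  rw [Nat.card_congr (lstatesEquiv K), Nat.card_sigma]
  have h : ∀ S : {S : Set α // K ⊆ S ∧ S.Nonempty},
      Nat.card {r : Setoid α // ∀ ⦃x y : α⦄, r x y → (x ∈ S.1 ↔ y ∈ S.1)} =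
      bell S.1.toFinset.card * bell (Fintype.card α - S.1.toFinset.card) := by
    intro S
    rw [Nat.card_congr (lpartFiberEquiv S.1), Nat.card_prod, card_setoid_eq_bell,
      card_setoid_eq_bell, Nat.card_coe_set_eq, Nat.card_coe_set_eq, Set.ncard_compl,
      Set.ncard_eq_toFinset_card', Nat.card_eq_fintype_card]
  rw [Finset.sum_congr rfl fun S _ => h S]
  refine Finset.sum_bij (fun S _ => S.1.toFinset) ?_ ?_ ?_ ?_
  · intro S _
    simpa using S.2
  · intro S _ T _ hST
    exact Subtype.ext (Set.toFinset_inj.1 hST)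
  · intro S hS
    refine ⟨⟨(S : Set α), by simpa using hS⟩, by simp, by simp⟩
  · intro S _
    rfl

/-- The cardinality `P(n,k)` of `Π_l(X,π_X)`, where `X` has `n ≥ 1` elements and `π_X` has
`k` labelled (and `n - k` unlabelled) singleton blocks, satisfies
`P(n,0) = ∑_{j=1}^{n} C(n,j) B(j) B(n-j)` and, for `k ≥ 1`,
`P(n,k) = ∑_{j=0}^{n-k} C(n-k,j) B(k+j) B(n-k-j)`. -/
theorem card_states {α : Type*} [Fintype α] (K : Set α) (n k : ℕ)
    (hn : Fintype.card α = n) (hk : K.ncard = k) (hn1 : 1 ≤ n) :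
    (k = 0 →
        Nat.card (LStates α K) =
          ∑ j ∈ Finset.Icc 1 n, n.choose j * (bell j * bell (n - j))) ∧
      (1 ≤ k →
        Nat.card (LStates α K) =
          ∑ j ∈ Finset.range (n - k + 1), (n - k).choose j * (bell (k + j) * bell (n - k - j))) := by
  rw [card_lstates, hn]
  have hK : K.toFinset.card = k := by rw [← hk, Set.ncard_eq_toFinset_card']
  refine ⟨fun h0 => ?_, fun h1 => ?_⟩
  · have hKe : K = ∅ := by
      rw [h0] at hk
      exact (Set.ncard_eq_zero (Set.toFinite K)).1 hk
    subst hKe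
    have key := Finset.sum_powerset_apply_card
      (fun j => if 1 ≤ j then bell j * bell (n - j) else 0) (x := (Finset.univ : Finset α))
    rw [Finset.card_univ, hn] at key
    have hI : Finset.Icc 1 n = (Finset.range (n + 1)).filter (fun j => 1 ≤ j) := by
      ext j; simp; omega
    rw [hI, Finset.sum_filter, Finset.sum_filter]
    simp only [smul_eq_mul, mul_ite, mul_zero] at key
    rw [← key]
    simp only [Finset.powerset_univ]
    refine Finset.sum_congr rfl fun S _ => ?_
    simp [Nat.one_le_iff_ne_zero, Finset.nonempty_iff_ne_empty]
  · have hc : (K.toFinsetᶜ).card = n - k := by rw [Finset.card_compl, hn, hK]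
    have key := Finset.sum_powerset_apply_card
      (fun j => bell (k + j) * bell (n - k - j)) (x := K.toFinsetᶜ)
    rw [hc] at key
    simp only [smul_eq_mul] at key
    rw [← key]
    have hKne : K.toFinset.Nonempty := by rw [← Finset.card_pos]; omega
    symm
    refine Finset.sum_bij (fun T _ => K.toFinset ∪ T) ?_ ?_ ?_ ?_
    · intro T _
      simp only [Finset.mem_filter, Finset.mem_univ, true_and]
      refine ⟨by simp, hKne.mono Finset.subset_union_left⟩
    · intro T hT U hU h
      rw [Finset.mem_powerset] at hT hU
      ext x
      have hx := Finset.ext_iff.1 h x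
      have h1 := @hT x
      have h2 := @hU x
      simp only [Finset.mem_union, Finset.mem_compl] at hx h1 h2
      tauto
    · intro S hS
      simp only [Finset.mem_filter, Finset.mem_univ, true_and] at hS
      refine ⟨S \ K.toFinset, ?_, ?_⟩
      · rw [Finset.mem_powerset]
        intro x; simp
      · apply Finset.union_sdiff_of_subset
        intro x hx
        exact_mod_cast hS.1 (by simpa using hx)
    · intro T hT
      rw [Finset.mem_powerset] at hT
      have hd : Disjoint K.toFinset T := by
        rw [disjoint_comm]
        exact Finset.subset_compl_iff_disjoint_right.1 hT
      rw [Finset.card_union_of_disjoint hd, hK, Nat.sub_add_eq]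

end
end

section
/- Let X be a finite nonempty set and let π ∈ Π_l(X) be a labelled set partition having at least one labelled block and at least one unlabelled block. Then μ_{Π_l(X)}(π, 1̂_l) = 0, where 1̂_l is the maximum of Π_l(X), the single labelled block X∪{l}. -/
open scoped Classical

noncomputable section

/-- The maximum `1̂_l` of `Π_l(X)`: the single labelled block `X ∪ {l}`. -/
def LPart.topL (α : Type*) : LPart α := ⟨⊤, Set.univ, fun _ _ _ => Iff.rfl⟩

open IncidenceAlgebra in
theorem mu_mixed_aux {α : Type*} [Finite α] [LocallyFiniteOrder (LPart α)]
    (π : LPart α) : π.lab.Nonempty → (∃ x, x ∉ π.lab) →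
    IncidenceAlgebra.mu ℝ π (LPart.topL α) = 0 := by
  have le_top' : ∀ σ : LPart α, σ ≤ LPart.topL α := fun σ =>
    ⟨(le_top : σ.rel ≤ ⊤), Set.subset_univ _⟩
  induction π using WellFoundedGT.induction with
  | ind π ih =>
  intro h1 h2
  obtain ⟨a, ha⟩ := h1
  obtain ⟨b, hb⟩ := h2
  have hne : π ≠ LPart.topL α := by
    rintro rfl
    exact hb (Set.mem_univ b)
  let c : LPart α := ⟨π.rel, Set.univ, fun _ _ _ => Iff.rfl⟩
  have hπc : π ≤ c := ⟨le_refl π.rel, Set.subset_univ _⟩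
  have hcne : c ≠ LPart.topL α := by
    intro h
    have hr : π.rel = ⊤ := congrArg LPart.rel h
    have hab : π.rel a b := by rw [hr]; trivial
    exact hb ((π.lab_mem hab).1 ha)
  have hc := sum_Icc_mu_left (𝕜 := ℝ) c (LPart.topL α)
  rw [if_neg hcne] at hc
  rw [mu_eq_neg_sum_Ioc_of_ne hne, neg_eq_zero, ← hc]
  symm
  apply Finset.sum_subset
  · intro x hx
    rw [Finset.mem_Icc] at hx
    rw [Finset.mem_Ioc]
    refine ⟨lt_of_le_of_ne (hπc.trans hx.1) ?_, hx.2⟩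
    rintro rfl
    exact hb (hx.1.2 (Set.mem_univ b))
  · intro x hx hx'
    rw [Finset.mem_Ioc] at hx
    apply ih x hx.1 ⟨a, hx.1.le.2 ha⟩
    by_contra! hall
    exact hx' (Finset.mem_Icc.2 ⟨⟨hx.1.le.1, fun y _ => hall y⟩, hx.2⟩)

/-- If a labelled set partition `π` of a finite nonempty set has at least one labelled
block and at least one unlabelled block, then `μ_{Π_l(X)}(π, 1̂_l) = 0`. -/
theorem mobius_eq_zero_of_mixed_blocks {α : Type*} [Fintype α] [Nonempty α]
    (π : LPart α) (h1 : π.lab.Nonempty) (h2 : ∃ x, x ∉ π.lab) :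
    mobius π (LPart.topL α) = 0 := by
  unfold mobius
  letI : LocallyFiniteOrder (LPart α) := Fintype.toLocallyFiniteOrder
  exact mu_mixed_aux π h1 h2

end
end

section
/- (Wilf's factorization) Let P be a finite upper semilattice (every two elements have a least upper bound) enumerated as p₁,…,p_n so that p_i ≤ p_j implies i ≤ j, and let E be the n×n matrix with entries e_{ij} = 1 if p_i ≤ p_j and 0 otherwise. Let f, g : P → ℝ be functions satisfying f(p_i) = ∑_{j : p_i ≤ p_j} g(p_j) for all i. Let F be the n×n matrix with entries f_{ij} = f(p_i ∨ p_j) and G the diagonal matrix with entries g(p_i). Then F = E G Eᵀ. -/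
open scoped Classical
open Matrix

/-- **Wilf's factorization.** Let `P` be a finite upper semilattice enumerated as
`p 0, …, p (n-1)` so that `p i ≤ p j` implies `i ≤ j`, let `E` be the zeta matrix
`e i j = [p i ≤ p j]`, and let `f g : P → ℝ` satisfy `f (p i) = ∑_{j : p i ≤ p j} g (p j)`.
If `F` is the matrix with entries `f (p i ⊔ p j)` and `G` is the diagonal matrix with
entries `g (p i)`, then `F = E * G * Eᵀ`. -/
theorem wilf_factorization {n : ℕ} {P : Type*} [Fintype P] [SemilatticeSup P]
    (p : Fin n ≃ P) (hp : ∀ i j : Fin n, p i ≤ p j → i ≤ j)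
    (f g : P → ℝ) (hfg : ∀ x : P, f x = ∑ y : P, if x ≤ y then g y else 0)
    (E : Matrix (Fin n) (Fin n) ℝ) (hE : ∀ i j, E i j = if p i ≤ p j then 1 else 0)
    (F : Matrix (Fin n) (Fin n) ℝ) (hF : ∀ i j, F i j = f (p i ⊔ p j))
    (G : Matrix (Fin n) (Fin n) ℝ) (hG : G = Matrix.diagonal fun i => g (p i)) :
    F = E * G * Eᵀ := by
  subst hG
  ext i j
  rw [hF, hfg, ← Equiv.sum_comp p, Matrix.mul_apply]
  refine Finset.sum_congr rfl fun k _ => ?_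
  rw [Matrix.mul_diagonal, Matrix.transpose_apply, hE, hE]
  by_cases h1 : p i ≤ p k <;> by_cases h2 : p j ≤ p k <;> simp [sup_le_iff, h1, h2]
end

section
/- Let P be a finite upper semilattice, g : P → ℝ, and define f : P → ℝ by f(p) = ∑_{q ∈ P, q ≥ p} g(q). Let P₀ = {p ∈ P : g(p) ≠ 0} and let F₀ be the matrix indexed by P₀ × P₀ with entries (F₀)_{xy} = f(x ∨ y). Then F₀ is invertible. -/
open scoped Classical

theorem zeta_isUnit_s16 {Q : Type*} [Fintype Q] [DecidableEq Q] [PartialOrder Q] :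
    IsUnit (Matrix.of fun a q : Q => if a ≤ q then (1 : ℝ) else 0) := by
  rw [← Matrix.mulVec_injective_iff_isUnit]
  rw [← Matrix.coe_mulVecLin, injective_iff_map_eq_zero]
  intro v hv
  funext a
  induction a using (wellFounded_gt (α := Q)).induction with
  | _ a ih =>
    have h := congrFun hv a
    simp only [Matrix.mulVecLin_apply, Matrix.mulVec, dotProduct, Matrix.of_apply,
      Pi.zero_apply] at h
    rw [Finset.sum_eq_single a] at h
    · simpa using h
    · intro b _ hb
      by_cases hab : a ≤ b
      · have := ih b (lt_of_le_of_ne hab (Ne.symm hb))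
        simp [this]
      · simp [hab]
    · simp

/-- Let `P` be a finite upper semilattice, `g : P → ℝ`, and `f p = ∑_{q ≥ p} g q`.
Let `P₀ = {p : P // g p ≠ 0}` and let `F₀` be the `P₀ × P₀` matrix with entries
`f (x ⊔ y)`.  Then `F₀` is invertible. -/
theorem wilf_restricted_invertible {P : Type*} [Fintype P] [SemilatticeSup P]
    (g f : P → ℝ) (hf : ∀ x : P, f x = ∑ y : P, if x ≤ y then g y else 0)
    (F0 : Matrix {x : P // g x ≠ 0} {x : P // g x ≠ 0} ℝ)
    (hF0 : ∀ a b, F0 a b = f (a.1 ⊔ b.1)) :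
    IsUnit F0 := by
  have hZ := zeta_isUnit_s16 (Q := {x : P // g x ≠ 0})
  set Z := (Matrix.of fun a q : {x : P // g x ≠ 0} => if a ≤ q then (1 : ℝ) else 0) with hZd
  have hD : IsUnit (Matrix.diagonal fun q : {x : P // g x ≠ 0} => g q.1) := by
    rw [Matrix.isUnit_iff_isUnit_det, Matrix.det_diagonal, isUnit_iff_ne_zero]
    exact Finset.prod_ne_zero_iff.2 fun q _ => q.2
  have hT : IsUnit Z.transpose := by
    rw [Matrix.isUnit_iff_isUnit_det, Matrix.det_transpose, ← Matrix.isUnit_iff_isUnit_det]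
    exact hZ
  have key : F0 = Z * (Matrix.diagonal fun q : {x : P // g x ≠ 0} => g q.1) * Z.transpose := by
    ext a b
    rw [hF0, hf, Matrix.mul_apply]
    simp only [Matrix.mul_diagonal, Matrix.transpose_apply, hZd, Matrix.of_apply]
    rw [← Finset.sum_subset (Finset.subset_univ (Finset.univ.filter fun x : P => g x ≠ 0))]
    · rw [Finset.sum_subtype (p := fun x : P => g x ≠ 0) _ (by simp)]
      refine Finset.sum_congr rfl fun q _ => ?_
      simp only [sup_le_iff, Subtype.coe_le_coe]
      by_cases h1 : a ≤ q <;> by_cases h2 : b ≤ q <;> simp [h1, h2]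
    · intro x _ hx
      have : g x = 0 := by simpa using hx
      simp [this]
  rw [key]
  exact (hZ.mul hD).mul hT
end
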